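/- For every γ ∈ ℂ, the algebra 𝔏₅ degenerates to 𝔑₂(γ): the structure λ_γ with table e₁e₁ = e₃, e₁e₂ = e₄, e₂e₁ = −γe₃, e₂e₂ = −e₄ lies in the closure of the GL(V)-orbit of the structure μ with table e₁e₁ = e₃, e₂e₁ = e₃, e₂e₂ = e₄, e₃e₁ = e₄. -/

import Mathlib

noncomputable section

/-- `V = ℂ⁴`. -/
abbrev V : Type := Fin 4 → ℂ

/-- The standard basis vectors `e₁, e₂, e₃, e₄` of `V` (indexed by `0, 1, 2, 3`). -/
def e (i : Fin 4) : V := Pi.single i 1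

/-- The `GL(V)`-orbit `O(μ)` of an algebra structure `μ` on `V`, for the action
`(g • μ)(x, y) = g (μ (g⁻¹ x) (g⁻¹ y))`. -/
def orbit (μ : V →L[ℂ] V →L[ℂ] V) : Set (V →L[ℂ] V →L[ℂ] V) :=
  {ν | ∃ g : V ≃L[ℂ] V, ∀ x y : V, ν x y = g (μ (g.symm x) (g.symm y))}


theorem V_expand (x : V) : x = x 0 • e 0 + x 1 • e 1 + x 2 • e 2 + x 3 • e 3 := by
  ext i; fin_cases i <;> simp [e]

theorem bil_expand (μ : V →L[ℂ] V →L[ℂ] V) (x y : V) :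
    μ x y = ∑ i, ∑ j, (x i * y j) • μ (e i) (e j) := by
  conv_lhs => rw [V_expand x, V_expand y]
  simp only [map_add, map_smul, _root_.add_apply, _root_.smul_apply,
    Fin.sum_univ_four, smul_add, smul_smul]
  module

theorem gen_cont {E : Type*} [NormedAddCommGroup E] [NormedSpace ℂ E] (l a b : E)
    {f g : ℂ → ℂ} (hf : Continuous f) (hg : Continuous g) :
    Continuous (fun t => l + f t • a + g t • b) := by fun_prop

theorem gen_zero {E : Type*} [NormedAddCommGroup E] [NormedSpace ℂ E] (l a b : E)
    {f g : ℂ} (hf : f = 0) (hg : g = 0) : l + f • a + g • b = l := by simp [hf, hg]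

/-- elementary bilinear map -/
def bil (i j : Fin 4) (v : V) : V →L[ℂ] V →L[ℂ] V :=
  (ContinuousLinearMap.proj (R := ℂ) (φ := fun _ : Fin 4 => ℂ) i).smulRight
    ((ContinuousLinearMap.proj (R := ℂ) (φ := fun _ : Fin 4 => ℂ) j).smulRight v)

theorem bil_apply (i j : Fin 4) (v x y : V) : bil i j v x y = x i • y j • v := by
  simp [bil]

/-- change of basis -/
def Hlin (m b : ℂ) : V →ₗ[ℂ] V where
  toFun x := ![b * (1 - m) * x 0, b * m * (x 0 - x 1),
    b * (-m / (1 - m)) * m * (x 0 - x 1) + b ^ 2 * (1 - m) * x 2, -m ^ 2 * b ^ 2 * x 3]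
  map_add' x y := by
    ext i; fin_cases i <;> simp <;> ring
  map_smul' c x := by
    ext i; fin_cases i <;> simp <;> ring

theorem Hlin_inj (m b : ℂ) (hm : m ≠ 0) (hm1 : 1 - m ≠ 0) (hb : b ≠ 0) :
    Function.Injective (Hlin m b) := by
  rw [injective_iff_map_eq_zero]
  intro x hx
  have h0 := congrFun hx 0
  have h1 := congrFun hx 1
  have h2 := congrFun hx 2
  have h3 := congrFun hx 3
  simp [Hlin, hm, hm1, hb] at h0 h1 h2 h3
  rw [h0] at h1 h2
  have h1' : x 1 = 0 := by simpa using h1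
  rw [h1'] at h2
  have h2' : x 2 = 0 := by simpa [hm1, hb] using h2
  ext i; fin_cases i <;> simp [h0, h1', h2', h3]

/-- For every γ ∈ ℂ, 𝔏₅ degenerates to 𝔑₂(γ). -/
theorem stmt15 (γ : ℂ) (μ lam : V →L[ℂ] V →L[ℂ] V)
    (hμ : ∀ i j : Fin 4, μ (e i) (e j) =
    (![
      ![e 2, 0, 0, 0],
      ![e 2, e 3, 0, 0],
      ![e 3, 0, 0, 0],
      ![0, 0, 0, 0]
     ] : Fin 4 → Fin 4 → V) i j)
    (hlam : ∀ i j : Fin 4, lam (e i) (e j) =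
    (![
      ![e 2, e 3, 0, 0],
      ![(-γ) • e 2, -e 3, 0, 0],
      ![0, 0, 0, 0],
      ![0, 0, 0, 0]
     ] : Fin 4 → Fin 4 → V) i j) :
    lam ∈ closure (orbit μ) := by
  set F : ℂ → (V →L[ℂ] V →L[ℂ] V) := fun t =>
    lam + (-t) • bil 1 0 (e 2) + (-(t * (1 - (γ + t)) ^ 2)) • bil 2 0 (e 3) with hF
  have hc : Continuous F := by
    exact gen_cont lam _ _ (by fun_prop) (by fun_prop)
  have h0 : F 0 = lam := gen_zero lam _ _ (by simp) (by simp)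
  have ht : Filter.Tendsto F (nhdsWithin 0 {0}ᶜ) (nhds lam) := by
    have := hc.tendsto 0
    rw [h0] at this
    exact this.mono_left nhdsWithin_le_nhds
  refine mem_closure_of_tendsto ht ?_
  have key : ∀ t : ℂ, t ≠ 0 → γ + t ≠ 0 → 1 - (γ + t) ≠ 0 → F t ∈ orbit μ := by
    intro t ht hm hm1
    have hb : t * (γ + t) ^ 2 ≠ 0 := mul_ne_zero ht (pow_ne_zero _ hm)
    let H : V ≃L[ℂ] V := (LinearEquiv.ofInjectiveEndo _
      (Hlin_inj (γ + t) (t * (γ + t) ^ 2) hm hm1 hb)).toContinuousLinearEquiv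
    have hH : ∀ x, H x = Hlin (γ + t) (t * (γ + t) ^ 2) x := fun x => rfl
    refine ⟨H.symm, fun x y => ?_⟩
    rw [ContinuousLinearEquiv.symm_symm, ContinuousLinearEquiv.eq_symm_apply, hH, hH, hH]
    simp only [hF, _root_.add_apply, _root_.smul_apply, bil_apply]
    rw [bil_expand lam, bil_expand μ]
    simp only [hμ, hlam]
    ext i
    fin_cases i <;> simp [Fin.sum_univ_four, Hlin, e] <;> field_simp <;> ring
  have n1 : ∀ a : ℂ, ∀ᶠ t in nhdsWithin (0:ℂ) {0}ᶜ, t ≠ a := by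
    intro a
    by_cases ha : a = 0
    · subst ha; exact eventually_mem_nhdsWithin
    · exact nhdsWithin_le_nhds (isOpen_ne.mem_nhds (Ne.symm ha))
  filter_upwards [n1 0, n1 (-γ), n1 (1 - γ)] with t a b c
  refine key t a (fun h => b ?_) (fun h => c ?_)
  · linear_combination h
  · linear_combination -h
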